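/- arXiv:1604.07695 — 2 statements merged into one kernel-verified Lean document; each statement's English description precedes it below -/
import Mathlib

section
/- Let 𝔤 be a real Lie algebra and let 𝔨 and 𝔭 be linear subspaces with 𝔤 = 𝔨 ⊕ 𝔭 as a vector space, [𝔨, 𝔨] ⊆ 𝔨, [𝔨, 𝔭] ⊆ 𝔭, and [𝔭, 𝔭] ⊆ 𝔨. Let v ∈ 𝔨 be such that [v, x] ≠ 0 for every nonzero x ∈ 𝔭. Then every abelian Lie subalgebra 𝔱′ of 𝔤 with dim 𝔱′ ≥ 2 that is contained in the subspace ℝv + 𝔭 is in fact contained in 𝔭. -/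
/-!
If `x = a v + p` and `y = b v + q` with `p, q ∈ 𝔭`, then `⁅x, y⁆ = ⁅v, a q - b p⁆ + ⁅p, q⁆`, whose
first summand lies in `𝔭` and whose second lies in `𝔨`. So `⁅x, y⁆ = 0` forces
`⁅v, a q - b p⁆ = 0`, hence `a q = b p` and therefore `a y = b x`. Two linearly independent elements
`y`, `z` of an abelian subspace of `ℝv + 𝔭` thus have no `v`-component, and comparing any other
element `x = a v + p` of it with `y` gives `a y = 0`, so `a = 0`.
-/

theorem exists_linearIndependent_pair_of_two_le_rank {R M : Type*} [Ring R] [Nontrivial R]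
    [AddCommGroup M] [Module R M] {N : Submodule R M} (hrank : 2 ≤ Module.rank R N) :
    ∃ x ∈ N, ∃ y ∈ N, LinearIndependent R ![x, y] := by
  obtain ⟨u, hu⟩ := (Module.le_rank_iff (n := 2)).mp (mod_cast hrank)
  refine ⟨u 0, (u 0).2, u 1, (u 1).2, ?_⟩
  have hpair : N.subtype ∘ u = ![(u 0 : M), (u 1 : M)] := by
    ext i
    fin_cases i <;> rfl
  exact hpair ▸ hu.map' N.subtype N.ker_subtype

section

variable {R L : Type*} [CommRing R] [LieRing L] [LieAlgebra R L]

theorem lie_smul_add_smul_add (a b : R) (v p q : L) :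
    ⁅a • v + p, b • v + q⁆ = ⁅v, a • q - b • p⁆ + ⁅p, q⁆ := by
  simp only [add_lie, lie_add, lie_sub, smul_lie, lie_smul, lie_self, smul_zero]
  rw [← lie_skew v p]
  module

variable {𝔨 𝔭 : Submodule R L} {v : L}

theorem smul_eq_smul_of_lie_smul_add_eq_zero (hdisj : Disjoint 𝔨 𝔭)
    (hvp : ∀ x ∈ 𝔭, ⁅v, x⁆ ∈ 𝔭) (hpp : ∀ x ∈ 𝔭, ∀ y ∈ 𝔭, ⁅x, y⁆ ∈ 𝔨)
    (hreg : ∀ x ∈ 𝔭, ⁅v, x⁆ = 0 → x = 0) {p q : L} (hp : p ∈ 𝔭) (hq : q ∈ 𝔭) {a b : R}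
    (hcomm : ⁅a • v + p, b • v + q⁆ = 0) :
    a • (b • v + q) = b • (a • v + p) := by
  rw [lie_smul_add_smul_add] at hcomm
  have hmem : a • q - b • p ∈ 𝔭 := 𝔭.sub_mem (𝔭.smul_mem a hq) (𝔭.smul_mem b hp)
  have hlie_mem : ⁅v, a • q - b • p⁆ ∈ 𝔨 := by
    rw [eq_neg_of_add_eq_zero_left hcomm]
    exact 𝔨.neg_mem (hpp p hp q hq)
  have hlie : ⁅v, a • q - b • p⁆ = 0 :=
    Submodule.disjoint_def.mp hdisj _ hlie_mem (hvp _ hmem)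
  have hsmul : a • q = b • p := sub_eq_zero.mp (hreg _ hmem hlie)
  rw [smul_add, smul_add, hsmul, smul_comm]

theorem mem_and_mem_of_linearIndependent_of_lie_eq_zero (hdisj : Disjoint 𝔨 𝔭)
    (hvp : ∀ x ∈ 𝔭, ⁅v, x⁆ ∈ 𝔭) (hpp : ∀ x ∈ 𝔭, ∀ y ∈ 𝔭, ⁅x, y⁆ ∈ 𝔨)
    (hreg : ∀ x ∈ 𝔭, ⁅v, x⁆ = 0 → x = 0) {x y : L}
    (hx : x ∈ Submodule.span R {v} ⊔ 𝔭) (hy : y ∈ Submodule.span R {v} ⊔ 𝔭)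
    (hcomm : ⁅x, y⁆ = 0) (hind : LinearIndependent R ![x, y]) : x ∈ 𝔭 ∧ y ∈ 𝔭 := by
  simp only [Submodule.mem_sup, Submodule.mem_span_singleton, exists_exists_eq_and] at hx hy
  obtain ⟨a, p, hp, rfl⟩ := hx
  obtain ⟨b, q, hq, rfl⟩ := hy
  obtain ⟨rfl, rfl⟩ : b = 0 ∧ a = 0 :=
    hind.eq_zero_of_pair' (smul_eq_smul_of_lie_smul_add_eq_zero hdisj hvp hpp hreg hp hq hcomm).symm
  simpa only [zero_smul, zero_add] using And.intro hp hq

theorem stmt_6_general [Nontrivial R] (hdisj : Disjoint 𝔨 𝔭)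
    (hvp : ∀ x ∈ 𝔭, ⁅v, x⁆ ∈ 𝔭) (hpp : ∀ x ∈ 𝔭, ∀ y ∈ 𝔭, ⁅x, y⁆ ∈ 𝔨)
    (hreg : ∀ x ∈ 𝔭, ⁅v, x⁆ = 0 → x = 0)
    {𝔱 : Submodule R L} (habelian : ∀ x ∈ 𝔱, ∀ y ∈ 𝔱, ⁅x, y⁆ = 0)
    (hrank : 2 ≤ Module.rank R 𝔱) (hsub : 𝔱 ≤ Submodule.span R {v} ⊔ 𝔭) : 𝔱 ≤ 𝔭 := by
  obtain ⟨y, hyt, z, hzt, hind⟩ := exists_linearIndependent_pair_of_two_le_rank hrank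
  obtain ⟨hy, -⟩ := mem_and_mem_of_linearIndependent_of_lie_eq_zero hdisj hvp hpp hreg
    (hsub hyt) (hsub hzt) (habelian y hyt z hzt) hind
  intro x hx
  obtain ⟨w, hw, p, hp, rfl⟩ := Submodule.mem_sup.mp (hsub hx)
  obtain ⟨a, rfl⟩ := Submodule.mem_span_singleton.mp hw
  have hsmul : a • y = (0 : R) • z := by
    have hcomm : ⁅a • v + p, (0 : R) • v + y⁆ = 0 := by
      simpa only [zero_smul, zero_add] using habelian _ hx y hyt
    simpa only [zero_smul, zero_add] using
      smul_eq_smul_of_lie_smul_add_eq_zero hdisj hvp hpp hreg hp hy hcomm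
  obtain ⟨rfl, -⟩ := hind.eq_zero_of_pair' hsmul
  simpa only [zero_smul, zero_add] using hp

end

/-- For a symmetric pair decomposition `𝔤 = 𝔨 ⊕ 𝔭` and `v ∈ 𝔨` with `ad(v)`
injective on `𝔭`, every abelian subalgebra of dimension at least `2` contained
in `ℝv + 𝔭` is contained in `𝔭`. -/
theorem stmt_6 {𝔤 : Type*} [LieRing 𝔤] [LieAlgebra ℝ 𝔤]
    (𝔨 𝔭 : Submodule ℝ 𝔤)
    (hsum : 𝔨 ⊔ 𝔭 = ⊤) (hint : 𝔨 ⊓ 𝔭 = ⊥)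
    (hkk : ∀ x ∈ 𝔨, ∀ y ∈ 𝔨, ⁅x, y⁆ ∈ 𝔨)
    (hkp : ∀ x ∈ 𝔨, ∀ y ∈ 𝔭, ⁅x, y⁆ ∈ 𝔭)
    (hpp : ∀ x ∈ 𝔭, ∀ y ∈ 𝔭, ⁅x, y⁆ ∈ 𝔨)
    (v : 𝔤) (hv : v ∈ 𝔨) (hreg : ∀ x ∈ 𝔭, x ≠ 0 → ⁅v, x⁆ ≠ 0)
    (𝔱' : LieSubalgebra ℝ 𝔤) (habelian : ∀ x ∈ 𝔱', ∀ y ∈ 𝔱', ⁅x, y⁆ = 0)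
    (hdim : 2 ≤ Module.rank ℝ 𝔱')
    (hsub : (𝔱' : Set 𝔤) ⊆ (Submodule.span ℝ {v} ⊔ 𝔭 : Submodule ℝ 𝔤)) :
    (𝔱' : Set 𝔤) ⊆ 𝔭 :=
  stmt_6_general (disjoint_iff.mpr hint) (hkp v hv) hpp
    (fun x hx ↦ not_imp_not.mp (hreg x hx)) (𝔱 := 𝔱'.toSubmodule) habelian hdim hsub
end

section
/- Let V be a finite-dimensional real vector space (with its canonical topology) and let F : V → ℝ be a continuous function such that F(y) > 0 for every y ≠ 0, F(λy) = λF(y) for all λ ≥ 0 and y ∈ V, and F(x + y) ≤ F(x) + F(y) for all x, y ∈ V. Let v ∈ V satisfy F(v) < 1 and F(−v) < 1. Then the map φ : V → V defined by φ(y) = y + F(y)·v is a bijection; equivalently, for every ỹ ∈ V there exists a unique y ∈ V with y + F(y)·v = ỹ, and for ỹ ≠ 0 there is a unique r ≥ 0 with F(ỹ − r·v) = r. -/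
/-!
The solutions `y` of `y + F y • v = z` are the points `z - r • v` where `r` solves the scalar
equation `F (z - r • v) = r`. Along the line `r ↦ z - r • v` the sublinear function `F` is convex,
hence continuous, and its slopes are at most `F (-v) < 1`. So `r ↦ r - F (z - r • v)` is continuous
with slopes bounded below by `1 - F (-v) > 0`, hence a bijection of `ℝ`, and its only zero is the
required `r`.
-/

open Filter Function

theorem bijective_of_continuous_of_mul_sub_le {g : ℝ → ℝ} {k : ℝ} (hg : Continuous g) (hk : 0 < k)
    (hslope : ∀ ⦃s r : ℝ⦄, s ≤ r → k * (r - s) ≤ g r - g s) : Bijective g := by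
  have strictMono : StrictMono g := fun s r hsr =>
    sub_pos.1 <| (mul_pos hk (sub_pos.2 hsr)).trans_le (hslope hsr.le)
  have tendsto_top : Tendsto g atTop atTop := by
    refine tendsto_atTop_mono' _ ?_ (tendsto_atTop_add_const_right _ (g 0)
      (tendsto_id.const_mul_atTop hk))
    filter_upwards [eventually_ge_atTop 0] with r hr
    simpa [le_sub_iff_add_le] using hslope hr
  have tendsto_bot : Tendsto g atBot atBot := by
    refine tendsto_atBot_mono' _ ?_ (tendsto_atBot_add_const_right _ (g 0)
      (tendsto_id.const_mul_atBot hk))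
    filter_upwards [eventually_le_atBot 0] with r hr
    have h0 : k * (0 - r) ≤ g 0 - g r := hslope hr
    simp only [id_eq]
    linarith
  exact ⟨strictMono.injective, hg.surjective tendsto_top tendsto_bot⟩

theorem existsUnique_add_smul_eq_iff {R V : Type*} [Ring R] [AddCommGroup V] [Module R V]
    {F : V → R} {v z : V} :
    (∃! y : V, y + F y • v = z) ↔ ∃! r : R, F (z - r • v) = r := by
  constructor
  · rintro ⟨y, rfl, y_unique⟩
    refine ⟨F y, by simp only [add_sub_cancel_right], fun r (hr : F _ = r) => ?_⟩
    have hy : y + F y • v - r • v = y := y_unique _ (by simp only [hr, sub_add_cancel])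
    rw [← hr, hy]
  · rintro ⟨r, hr, r_unique⟩
    refine ⟨z - r • v, by simp only [hr, sub_add_cancel], ?_⟩
    rintro y rfl
    rw [← r_unique (F y) (by simp only [add_sub_cancel_right]), add_sub_cancel_right]

/-- Sublinear functionals: positively homogeneous and subadditive real functions on a real vector
space. Signs are not restricted, so linear functionals are included, as are Minkowski norms. -/
structure IsSublinear {V : Type*} [AddCommGroup V] [Module ℝ V] (F : V → ℝ) : Prop where
  map_smul : ∀ (c : ℝ) (x : V), 0 ≤ c → F (c • x) = c * F x
  map_add_le : ∀ x y : V, F (x + y) ≤ F x + F y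

namespace IsSublinear

variable {V : Type*} [AddCommGroup V] [Module ℝ V] {F : V → ℝ}

theorem map_zero (hF : IsSublinear F) : F 0 = 0 := by
  simpa only [zero_smul, zero_mul] using hF.map_smul 0 0 le_rfl

theorem nonneg_of_pos_of_ne_zero (hF : IsSublinear F) (hpos : ∀ y, y ≠ 0 → 0 < F y) (y : V) :
    0 ≤ F y := by
  rcases eq_or_ne y 0 with rfl | hy
  exacts [hF.map_zero.ge, (hpos y hy).le]

theorem convexOn (hF : IsSublinear F) : ConvexOn ℝ Set.univ F := by
  refine ⟨convex_univ, fun x _ y _ a b ha hb _ => ?_⟩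
  simpa only [hF.map_smul _ _ ha, hF.map_smul _ _ hb, smul_eq_mul] using
    hF.map_add_le (a • x) (b • y)

theorem continuous_sub_smul (hF : IsSublinear F) (z v : V) :
    Continuous fun r : ℝ => F (z - r • v) := by
  have hline : ConvexOn ℝ Set.univ (F ∘ AffineMap.lineMap z (z - v)) :=
    hF.convexOn.comp_affineMap _
  simpa [comp_def, AffineMap.lineMap_apply, sub_eq_neg_add] using
    hline.locallyLipschitz.continuous

theorem map_sub_smul_le (hF : IsSublinear F) (z v : V) {s r : ℝ} (hsr : s ≤ r) :
    F (z - r • v) ≤ F (z - s • v) + (r - s) * F (-v) :=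
  calc
    F (z - r • v) = F ((z - s • v) + (r - s) • -v) := by congr 1; module
    _ ≤ F (z - s • v) + F ((r - s) • -v) := hF.map_add_le _ _
    _ = F (z - s • v) + (r - s) * F (-v) := by rw [hF.map_smul _ _ (sub_nonneg.2 hsr)]

theorem existsUnique_map_sub_smul_eq (hF : IsSublinear F) {v : V} (hv : F (-v) < 1) (z : V) :
    ∃! r : ℝ, F (z - r • v) = r := by
  have hbij : Bijective fun r : ℝ => r - F (z - r • v) := by
    refine bijective_of_continuous_of_mul_sub_le
      (continuous_id.sub (hF.continuous_sub_smul z v)) (sub_pos.2 hv) fun s r hsr => ?_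
    linarith [hF.map_sub_smul_le z v hsr]
  simpa only [sub_eq_zero, eq_comm] using hbij.existsUnique 0

end IsSublinear

theorem stmt_9_general {V : Type*} [AddCommGroup V] [Module ℝ V] {F : V → ℝ}
    (hF : IsSublinear F) {v : V} (hv : F (-v) < 1) :
    Bijective (fun y : V => y + F y • v) ∧
    (∀ z : V, ∃! y : V, y + F y • v = z) ∧
    (∀ z : V, ∃! r : ℝ, F (z - r • v) = r) := by
  have hr := hF.existsUnique_map_sub_smul_eq hv
  have hy (z : V) : ∃! y : V, y + F y • v = z := existsUnique_add_smul_eq_iff.2 (hr z)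
  exact ⟨(bijective_iff_existsUnique _).2 hy, hy, hr⟩

/-- The navigation process `y ↦ y + F(y)·v` for a Minkowski-type norm `F` and
a vector `v` with `F(v) < 1` and `F(−v) < 1` is a bijection. -/
theorem stmt_9 {V : Type*} [NormedAddCommGroup V] [NormedSpace ℝ V]
    [FiniteDimensional ℝ V]
    (F : V → ℝ) (hFcont : Continuous F)
    (hFpos : ∀ y : V, y ≠ 0 → 0 < F y)
    (hFhom : ∀ (l : ℝ) (y : V), 0 ≤ l → F (l • y) = l * F y)
    (hFsub : ∀ x y : V, F (x + y) ≤ F x + F y)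
    (v : V) (hv : F v < 1) (hv' : F (-v) < 1) :
    Function.Bijective (fun y : V => y + F y • v) ∧
    (∀ z : V, ∃! y : V, y + F y • v = z) ∧
    (∀ z : V, z ≠ 0 → ∃! r : ℝ, 0 ≤ r ∧ F (z - r • v) = r) := by
  have hF : IsSublinear F := ⟨hFhom, hFsub⟩
  obtain ⟨hbij, hy, hr⟩ := stmt_9_general hF hv'
  refine ⟨hbij, hy, fun z _ => (existsUnique_congr fun r => and_iff_right_of_imp ?_).2 (hr z)⟩
  exact fun h => h ▸ hF.nonneg_of_pos_of_ne_zero hFpos _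
end
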